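/- arXiv:1609.02068 — 2 statements merged into one kernel-verified Lean document; each statement's English description precedes it below -/
import Mathlib

section
/- Let γ > 0, t₀ ∈ ℝ and 0 < R ≤ 1. Suppose f ∈ C(ℝ) ∩ C¹(ℝ∖{t₀}) is supported in [t₀−R, t₀+R] and ⫴f⫴₁ < ∞. Then the integral defining U(f) converges absolutely and there is a constant C, depending only on γ (and not on f, t₀ or R), such that |U(f)| ≤ C·R^{γ/2}·⫴f⫴₁. -/
open MeasureTheory

/-! Since `1 / (t (1 - t)) = 1 / t + 1 / (1 - t)`, the integrand of `U(f)` is the difference of the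
slopes of `f` over `[0, 1 - t]` and over `[1 - t, 1]`. If `f` is `α`-Hölder with constant `K`, these
slopes are at most `K (1 - t) ^ (α - 1)` and `K t ^ (α - 1)`, which are integrable, so that
`|U(f)| ≤ 2 K / α`. A derivative bounded by `M |t - t₀| ^ (α - 1)` with `0 < α ≤ 1` makes `f`
`α`-Hölder with constant `2 M / α`. Finally, as `f` is supported in `[t₀ - R, t₀ + R]`, the bound
`|f'(t)| ≤ N |t - t₀| ^ (γ - 1)` can be traded for `|f'(t)| ≤ N R ^ (γ - α) |t - t₀| ^ (α - 1)`
with any `α ≤ γ`. -/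

open Set
open scoped NNReal

section PowerSingularity

variable {a b α : ℝ}

lemma intervalIntegrable_sub_left_rpow (hα : 0 < α) :
    IntervalIntegrable (fun t ↦ (t - a) ^ (α - 1)) volume a b := by
  have h : IntervalIntegrable (fun t : ℝ ↦ t ^ (α - 1)) volume 0 (b - a) :=
    intervalIntegral.intervalIntegrable_rpow' (by linarith)
  simpa using h.comp_sub_right a

lemma intervalIntegrable_sub_right_rpow (hα : 0 < α) :
    IntervalIntegrable (fun t ↦ (b - t) ^ (α - 1)) volume a b := by
  have h : IntervalIntegrable (fun t : ℝ ↦ t ^ (α - 1)) volume (b - a) 0 :=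
    intervalIntegral.intervalIntegrable_rpow' (by linarith)
  simpa using h.comp_sub_left b

lemma integral_sub_left_rpow (hα : 0 < α) :
    ∫ t in a..b, (t - a) ^ (α - 1) = (b - a) ^ α / α := by
  rw [intervalIntegral.integral_comp_sub_right (· ^ (α - 1)), integral_rpow (.inl (by linarith))]
  simp [hα.ne']

lemma integral_sub_right_rpow (hα : 0 < α) :
    ∫ t in a..b, (b - t) ^ (α - 1) = (b - a) ^ α / α := by
  rw [intervalIntegral.integral_comp_sub_left (· ^ (α - 1)), integral_rpow (.inl (by linarith))]
  simp [hα.ne']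

lemma integrableOn_rpow_add_one_sub_rpow (hα : 0 < α) :
    IntegrableOn (fun t : ℝ ↦ t ^ (α - 1) + (1 - t) ^ (α - 1)) (Ioo 0 1) :=
  (intervalIntegrable_iff_integrableOn_Ioo_of_le zero_le_one).1 <|
    (intervalIntegral.intervalIntegrable_rpow' (by linarith)).add
      (intervalIntegrable_sub_right_rpow hα)

lemma integral_Ioo_rpow_add_one_sub_rpow (hα : 0 < α) :
    ∫ t in Ioo (0 : ℝ) 1, (t ^ (α - 1) + (1 - t) ^ (α - 1)) = 2 / α := by
  rw [← integral_Ioc_eq_integral_Ioo, ← intervalIntegral.integral_of_le zero_le_one,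
    intervalIntegral.integral_add (intervalIntegral.intervalIntegrable_rpow' (by linarith))
      (intervalIntegrable_sub_right_rpow hα),
    integral_rpow (.inl (by linarith)), integral_sub_right_rpow hα, sub_add_cancel,
    Real.zero_rpow hα.ne', sub_zero, sub_zero, Real.one_rpow, ← add_div, one_add_one_eq_two]

end PowerSingularity

lemma nonneg_of_norm_le_mul_abs_sub_rpow {E : Type*} [NormedAddCommGroup E] {g : ℝ → E}
    {t₀ N s : ℝ} (hg : ∀ t ≠ t₀, ‖g t‖ ≤ N * |t - t₀| ^ s) : 0 ≤ N := by
  have h := hg (t₀ + 1) (by simp)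
  rw [add_sub_cancel_left, abs_one, Real.one_rpow, mul_one] at h
  exact (norm_nonneg _).trans h

section DerivBound

variable {E : Type*} [NormedAddCommGroup E] [NormedSpace ℝ E] {f : ℝ → E}

lemma norm_sub_le_of_norm_deriv_le_sub_left_rpow {a b α M : ℝ} (hα : 0 < α) (hab : a ≤ b)
    (hf : ContinuousOn f (Icc a b)) (hd : DifferentiableOn ℝ f (Ioo a b))
    (hb : ∀ t ∈ Ioo a b, ‖deriv f t‖ ≤ M * (t - a) ^ (α - 1)) :
    ‖f b - f a‖ ≤ M * ((b - a) ^ α / α) := by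
  rw [← integral_sub_left_rpow hα, ← intervalIntegral.integral_const_mul]
  exact norm_sub_le_integral_of_norm_deriv_le_of_le hab hf hd (.of_forall hb)
    ((intervalIntegrable_sub_left_rpow hα).const_mul M)

lemma norm_sub_le_of_norm_deriv_le_sub_right_rpow {a b α M : ℝ} (hα : 0 < α) (hab : a ≤ b)
    (hf : ContinuousOn f (Icc a b)) (hd : DifferentiableOn ℝ f (Ioo a b))
    (hb : ∀ t ∈ Ioo a b, ‖deriv f t‖ ≤ M * (b - t) ^ (α - 1)) :
    ‖f b - f a‖ ≤ M * ((b - a) ^ α / α) := by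
  rw [← integral_sub_right_rpow hα, ← intervalIntegral.integral_const_mul]
  exact norm_sub_le_integral_of_norm_deriv_le_of_le hab hf hd (.of_forall hb)
    ((intervalIntegrable_sub_right_rpow hα).const_mul M)

lemma norm_sub_le_of_norm_deriv_le_abs_sub_rpow {α t₀ x y M : ℝ} (hα : 0 < α) (hα1 : α ≤ 1)
    (hf : Continuous f) (hd : ∀ t ≠ t₀, DifferentiableAt ℝ f t)
    (hb : ∀ t ≠ t₀, ‖deriv f t‖ ≤ M * |t - t₀| ^ (α - 1)) (hxy : x ≤ y) :
    ‖f y - f x‖ ≤ 2 * M / α * (y - x) ^ α := by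
  have hM : 0 ≤ M := nonneg_of_norm_le_mul_abs_sub_rpow hb
  -- `c` is the point of `[x, y]` nearest to `t₀`: seen from `[x, y]`, the singularity at `t₀` is no
  -- worse than one at `c`.
  set c := max x (min t₀ y)
  have hxc : x ≤ c := le_max_left _ _
  have hcy : c ≤ y := max_le hxy (min_le_right _ _)
  have deriv_le {t d : ℝ} (h0 : 0 < d) (hdt : d ≤ |t - t₀|) :
      ‖deriv f t‖ ≤ M * d ^ (α - 1) :=
    (hb t (sub_ne_zero.1 (abs_pos.1 (h0.trans_le hdt)))).trans <| by
      gcongr M * ?_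
      exact Real.rpow_le_rpow_of_nonpos h0 hdt (by linarith)
  have sub_le {t : ℝ} (ht : t ∈ Ioo c y) : t - c ≤ |t - t₀| := by grind
  have sub_le' {t : ℝ} (ht : t ∈ Ioo x c) : c - t ≤ |t - t₀| := by grind
  have h_right : ‖f y - f c‖ ≤ M * ((y - c) ^ α / α) :=
    norm_sub_le_of_norm_deriv_le_sub_left_rpow hα hcy hf.continuousOn
      (fun t ht ↦ (hd t (by grind)).differentiableWithinAt)
      fun t ht ↦ deriv_le (sub_pos.2 ht.1) (sub_le ht)
  have h_left : ‖f c - f x‖ ≤ M * ((c - x) ^ α / α) :=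
    norm_sub_le_of_norm_deriv_le_sub_right_rpow hα hxc hf.continuousOn
      (fun t ht ↦ (hd t (by grind)).differentiableWithinAt)
      fun t ht ↦ deriv_le (sub_pos.2 ht.2) (sub_le' ht)
  calc ‖f y - f x‖
      ≤ ‖f y - f c‖ + ‖f c - f x‖ := norm_sub_le_norm_sub_add_norm_sub _ _ _
    _ ≤ M * ((y - c) ^ α / α) + M * ((c - x) ^ α / α) := add_le_add h_right h_left
    _ ≤ M * ((y - x) ^ α / α) + M * ((y - x) ^ α / α) := by gcongr
    _ = 2 * M / α * (y - x) ^ α := by ring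

theorem holderWith_of_norm_deriv_le_abs_sub_rpow {t₀ : ℝ} {α M : ℝ≥0} (hα : 0 < α) (hα1 : α ≤ 1)
    (hf : Continuous f) (hd : ∀ t ≠ t₀, DifferentiableAt ℝ f t)
    (hb : ∀ t ≠ t₀, ‖deriv f t‖ ≤ M * |t - t₀| ^ (α - 1 : ℝ)) :
    HolderWith (2 * M / α) α f := by
  have dist_le {x y : ℝ} (hxy : x ≤ y) :
      dist (f x) (f y) ≤ (2 * M / α : ℝ≥0) * dist x y ^ (α : ℝ) := by
    rw [dist_comm, dist_eq_norm, dist_comm, Real.dist_eq, abs_of_nonneg (sub_nonneg.2 hxy)]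
    exact norm_sub_le_of_norm_deriv_le_abs_sub_rpow hα hα1 hf hd hb hxy
  intro x y
  have h : dist (f x) (f y) ≤ (2 * M / α : ℝ≥0) * dist x y ^ (α : ℝ) := by
    rcases le_total x y with hxy | hyx
    · exact dist_le hxy
    · simpa only [dist_comm] using dist_le hyx
  rw [edist_nndist, edist_nndist, ← ENNReal.coe_rpow_of_nonneg _ α.coe_nonneg]
  exact_mod_cast h

lemma norm_slope_le_of_holderOnWith {s : Set ℝ} {K α : ℝ≥0} (hf : HolderOnWith K α f s) {x y : ℝ}
    (hx : x ∈ s) (hy : y ∈ s) (hxy : x < y) :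
    ‖slope f x y‖ ≤ K * (y - x) ^ (α - 1 : ℝ) := by
  have hpos : 0 < y - x := sub_pos.2 hxy
  have h := hf.dist_le hy hx
  rw [dist_eq_norm, Real.dist_eq, abs_of_pos hpos] at h
  rw [slope_def_module, norm_smul, norm_inv, Real.norm_of_nonneg hpos.le, inv_mul_eq_div,
    Real.rpow_sub_one hpos.ne', ← mul_div_assoc]
  gcongr

lemma norm_deriv_le_mul_rpow_mul_abs_sub_rpow {γ α t₀ R N t : ℝ}
    (hαγ : α ≤ γ) (hR : 0 ≤ R) (hN : 0 ≤ N) (hs : ∀ t ∉ Icc (t₀ - R) (t₀ + R), f t = 0)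
    (ht : t ≠ t₀) (hb : ‖deriv f t‖ ≤ N * |t - t₀| ^ (γ - 1)) :
    ‖deriv f t‖ ≤ N * R ^ (γ - α) * |t - t₀| ^ (α - 1) := by
  by_cases hmem : t ∈ Icc (t₀ - R) (t₀ + R)
  · have hpos : 0 < |t - t₀| := abs_pos.2 (sub_ne_zero.2 ht)
    have htR : |t - t₀| ≤ R := by grind
    calc ‖deriv f t‖
        ≤ N * |t - t₀| ^ (γ - 1) := hb
      _ = N * |t - t₀| ^ (γ - α) * |t - t₀| ^ (α - 1) := by
          rw [mul_assoc, ← Real.rpow_add hpos, sub_add_sub_cancel]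
      _ ≤ N * R ^ (γ - α) * |t - t₀| ^ (α - 1) := by gcongr
  · have hzero : f =ᶠ[nhds t] fun _ ↦ 0 :=
      Filter.eventually_of_mem (isClosed_Icc.isOpen_compl.mem_nhds hmem) hs
    rw [hzero.deriv_eq, deriv_const, norm_zero]
    positivity

end DerivBound

/-- The integrand of `U f`: the amount by which `f` exceeds at `1 - t` its chord over `[0, 1]`,
divided by `t (1 - t)`. -/
noncomputable def uIntegrand (f : ℝ → ℝ) (t : ℝ) : ℝ :=
  (f (1 - t) - (1 - t) * f 1 - t * f 0) / (t * (1 - t))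

/-- The functional `U`, with the junk value `0` when `uIntegrand f` is not integrable. -/
noncomputable def U (f : ℝ → ℝ) : ℝ :=
  ∫ t in Ioo 0 1, uIntegrand f t

section U

variable {f : ℝ → ℝ} {K α : ℝ≥0}

lemma uIntegrand_eq_slope_sub_slope {t : ℝ} (ht : t ∈ Ioo 0 1) :
    uIntegrand f t = slope f 0 (1 - t) - slope f (1 - t) 1 := by
  have h0 : t ≠ 0 := ht.1.ne'
  have h1 : 1 - t ≠ 0 := (sub_pos.2 ht.2).ne'
  rw [uIntegrand, slope_def_field, slope_def_field, sub_zero, sub_sub_cancel]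
  field_simp
  ring

lemma norm_uIntegrand_le_of_holderOnWith (hf : HolderOnWith K α f (Icc 0 1)) {t : ℝ}
    (ht : t ∈ Ioo 0 1) :
    ‖uIntegrand f t‖ ≤ K * (t ^ (α - 1 : ℝ) + (1 - t) ^ (α - 1 : ℝ)) := by
  have hmem : 1 - t ∈ Icc (0 : ℝ) 1 := by grind
  have h0 := norm_slope_le_of_holderOnWith hf (by simp) hmem (sub_pos.2 ht.2)
  have h1 := norm_slope_le_of_holderOnWith hf hmem (by simp) (sub_lt_self 1 ht.1)
  rw [sub_zero] at h0
  rw [sub_sub_cancel] at h1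
  calc ‖uIntegrand f t‖
      ≤ ‖slope f 0 (1 - t)‖ + ‖slope f (1 - t) 1‖ := by
        rw [uIntegrand_eq_slope_sub_slope ht]
        exact norm_sub_le _ _
    _ ≤ K * (1 - t) ^ (α - 1 : ℝ) + K * t ^ (α - 1 : ℝ) := add_le_add h0 h1
    _ = K * (t ^ (α - 1 : ℝ) + (1 - t) ^ (α - 1 : ℝ)) := by ring

lemma aestronglyMeasurable_uIntegrand (hf : ContinuousOn f (Icc 0 1)) :
    AEStronglyMeasurable (uIntegrand f) (volume.restrict (Ioo 0 1)) := by
  refine ContinuousOn.aestronglyMeasurable ?_ measurableSet_Ioo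
  have hcomp : ContinuousOn (fun t ↦ f (1 - t)) (Ioo 0 1) :=
    hf.comp (by fun_prop) fun t ht ↦ by grind
  refine ContinuousOn.div ?_ (by fun_prop) fun t ht ↦ ?_
  · exact (hcomp.sub (by fun_prop)).sub (by fun_prop)
  · exact mul_ne_zero ht.1.ne' (sub_pos.2 ht.2).ne'

theorem integrableOn_uIntegrand_of_holderOnWith (hα : 0 < α) (hf : HolderOnWith K α f (Icc 0 1)) :
    IntegrableOn (uIntegrand f) (Ioo 0 1) :=
  ((integrableOn_rpow_add_one_sub_rpow hα).const_mul (K : ℝ)).mono'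
    (aestronglyMeasurable_uIntegrand (hf.continuousOn hα))
    (ae_restrict_of_forall_mem measurableSet_Ioo fun _ ↦ norm_uIntegrand_le_of_holderOnWith hf)

theorem abs_U_le_of_holderOnWith (hα : 0 < α) (hf : HolderOnWith K α f (Icc 0 1)) :
    |U f| ≤ 2 * K / α :=
  calc |U f|
      ≤ ∫ t in Ioo (0 : ℝ) 1, K * (t ^ (α - 1 : ℝ) + (1 - t) ^ (α - 1 : ℝ)) :=
        norm_integral_le_of_norm_le ((integrableOn_rpow_add_one_sub_rpow hα).const_mul (K : ℝ))
          (ae_restrict_of_forall_mem measurableSet_Ioo fun _ ↦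
            norm_uIntegrand_le_of_holderOnWith hf)
    _ = K * (2 / α) := by
        rw [integral_const_mul, integral_Ioo_rpow_add_one_sub_rpow (NNReal.coe_pos.2 hα)]
    _ = 2 * K / α := by ring

end U

theorem U_bound_singular_general {f : ℝ → ℝ} {γ α t₀ R N : ℝ} (hα : 0 < α) (hα1 : α ≤ 1)
    (hαγ : α ≤ γ) (hR : 0 ≤ R) (hf : Continuous f) (hd : ∀ t ≠ t₀, DifferentiableAt ℝ f t)
    (hs : ∀ t ∉ Icc (t₀ - R) (t₀ + R), f t = 0)
    (hb : ∀ t ≠ t₀, |deriv f t| ≤ N * |t - t₀| ^ (γ - 1)) :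
    IntegrableOn (uIntegrand f) (Ioo 0 1) ∧ |U f| ≤ 4 / α ^ 2 * R ^ (γ - α) * N := by
  have hN : 0 ≤ N := nonneg_of_norm_le_mul_abs_sub_rpow (g := deriv f) hb
  lift α to ℝ≥0 using hα.le
  obtain ⟨M, hM⟩ : ∃ M : ℝ≥0, (M : ℝ) = N * R ^ (γ - α) := CanLift.prf _ (by positivity)
  have hHolder : HolderWith (2 * M / α) α f :=
    holderWith_of_norm_deriv_le_abs_sub_rpow hα hα1 hf hd fun t ht ↦
      hM ▸ norm_deriv_le_mul_rpow_mul_abs_sub_rpow hαγ hR hN hs ht (hb t ht)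
  refine ⟨integrableOn_uIntegrand_of_holderOnWith hα (hHolder.holderOnWith _),
    (abs_U_le_of_holderOnWith hα (hHolder.holderOnWith _)).trans_eq ?_⟩
  push_cast
  rw [hM]
  ring

/-- Let `γ > 0`, `t₀ ∈ ℝ`, `0 < R ≤ 1`. If `f` is continuous on `ℝ`, `C¹` away from `t₀`,
supported in `[t₀ − R, t₀ + R]`, and `⫴f⫴₁ ≤ N` (i.e. `|f(t)| ≤ N|t−t₀|^γ` and
`|f'(t)| ≤ N|t−t₀|^{γ−1}` for `t ≠ t₀`), then the integral defining
`U(f) = ∫₀¹ [f(1−t) − (1−t)f(1) − tf(0)]/(t(1−t)) dt` converges absolutely and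
`|U(f)| ≤ C R^{γ/2} N` with `C` depending only on `γ`. -/
theorem U_bound_singular (γ : ℝ) (hγ : 0 < γ) :
    ∃ C : ℝ, ∀ (f : ℝ → ℝ) (t₀ R N : ℝ), 0 < R → R ≤ 1 →
      Continuous f →
      (∀ t : ℝ, t ≠ t₀ → DifferentiableAt ℝ f t) →
      ContinuousOn (deriv f) {t₀}ᶜ →
      (∀ t : ℝ, t ∉ Set.Icc (t₀ - R) (t₀ + R) → f t = 0) →
      (∀ t : ℝ, t ≠ t₀ → |f t| ≤ N * |t - t₀| ^ γ) →
      (∀ t : ℝ, t ≠ t₀ → |deriv f t| ≤ N * |t - t₀| ^ (γ - 1)) →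
      IntegrableOn (fun t : ℝ => (f (1 - t) - (1 - t) * f 1 - t * f 0) / (t * (1 - t)))
        (Set.Ioo 0 1) ∧
      |∫ t in Set.Ioo (0:ℝ) 1, (f (1 - t) - (1 - t) * f 1 - t * f 0) / (t * (1 - t))|
        ≤ C * R ^ (γ / 2) * N := by
  -- This `α` gives `γ / 2 ≤ γ - α`, so that `R ^ (γ - α) ≤ R ^ (γ / 2)`.
  set α := min (γ / 2) 1
  have hα : 0 < α := lt_min (half_pos hγ) one_pos
  have hαγ : α ≤ γ / 2 := min_le_left _ _
  refine ⟨4 / α ^ 2, fun f t₀ R N hR hR1 hf hd _ hs _ hb ↦ ?_⟩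
  obtain ⟨hint, hU⟩ :=
    U_bound_singular_general hα (min_le_right _ _) (by linarith) hR.le hf hd hs hb
  have hN : 0 ≤ N := nonneg_of_norm_le_mul_abs_sub_rpow (g := deriv f) hb
  have hRpow : R ^ (γ - α) ≤ R ^ (γ / 2) :=
    Real.rpow_le_rpow_of_exponent_ge hR hR1 (by linarith)
  exact ⟨hint, hU.trans (by gcongr)⟩
end

section
/- Let n ≥ 3 be an integer. There is a constant C, depending only on n, with the following property: for every complex Hilbert space H, bounded self-adjoint operators A₁, A₂ on H, bounded self-adjoint operators P₁, P₂ on H with ‖P₁‖ ≤ 1 and ‖P₂‖ ≤ 1, and a bounded operator J on H satisfying [P₁, J] = [P₂, J] = 0 and (P₁ − P₂) J = 0, and for every compactly supported f ∈ Cⁿ(ℝ), one has ‖𝒟(A₁,P₁;f) J − J 𝒟(A₂,P₂;f)‖ ≤ C · N_n(f) · (‖(A₁−A₂) J‖ + ‖[A₂, J]‖) and ‖J 𝒟(A₁,P₁;f) − J 𝒟(A₂,P₂;f)‖ ≤ C · N_n(f) · (‖(A₁−A₂) J‖ + ‖[A₁, J]‖ + ‖[A₂, J]‖), where all norms are operator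 norms. -/
open scoped BigOperators

/-- `N_n(f) = ∫ F(x) ⟨x⟩^{n−2} dx` with `F(x) = Σ_{l=0}^n |f^{(l)}(x)| ⟨x⟩^{−n+l}`,
`⟨x⟩ = √(1+x²)`. -/
noncomputable def Nseminorm (n : ℕ) (f : ℝ → ℝ) : ℝ :=
  ∫ x : ℝ,
    (∑ l ∈ Finset.range (n + 1),
      |iteratedDeriv l f x| * Real.sqrt (1 + x ^ 2) ^ ((l : ℤ) - (n : ℤ))) *
    Real.sqrt (1 + x ^ 2) ^ ((n : ℤ) - 2)

/-- `𝒟(A, P; f) = P f(PAP) P − P f(A) P`, with `f(·)` the continuous functional calculus. -/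
noncomputable def Dop {H : Type*} [NormedAddCommGroup H] [InnerProductSpace ℂ H]
    [CompleteSpace H] (A P : H →L[ℂ] H) (f : ℝ → ℝ) : H →L[ℂ] H :=
  P * cfc f (P * A * P) * P - P * cfc f A * P

/-!
Apply Stokes' theorem to `F(w) / (w - x)` on the region `0 < v < b(u)`, `w = u + iv`, where `F` is
the almost analytic extension of `f` of order three. This Helffer–Sjöstrand formula writes `π f(x)`
as an integral of real parts of `c / (w - x)`, where `c` has size `v² |f‴(u)| / 2` inside the region
and `O(Σ_{l ≤ 2} |f⁽ˡ⁾(u)| b(u)ˡ)` on the graph of `b`. The quasi-commutator of resolvents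
`R_A(w) J - J R_B(w) = R_A(w) (A J - J B) R_B(w)` has norm at most `‖A J - J B‖ / v²`, so
`‖f(A) J - J f(B)‖` is at most `‖A J - J B‖` times an integral which for `b(u) = ⟨u⟩` is controlled
by `N₃(f)`. As `P₁ J = J P₂`, compression by the `Pᵢ` turns quasi-commutators into compressed
quasi-commutators, and both terms of `𝒟` inherit the bound.
-/

open MeasureTheory Set Complex
open scoped ComplexConjugate Real

section Resolvent

lemma resolvent_mul_sub_mul_resolvent {R 𝔄 : Type*} [CommRing R] [Ring 𝔄] [Algebra R 𝔄]
    {a b : 𝔄} {r : R} (ha : r ∈ resolventSet R a) (hb : r ∈ resolventSet R b) (j : 𝔄) :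
    resolvent a r * j - j * resolvent b r = resolvent a r * (a * j - j * b) * resolvent b r := by
  have hra : resolvent a r * (algebraMap R 𝔄 r - a) = 1 := Ring.inverse_mul_cancel _ ha
  have hrb : (algebraMap R 𝔄 r - b) * resolvent b r = 1 := Ring.mul_inverse_cancel _ hb
  calc resolvent a r * j - j * resolvent b r
      = resolvent a r * j * ((algebraMap R 𝔄 r - b) * resolvent b r)
          - resolvent a r * (algebraMap R 𝔄 r - a) * j * resolvent b r := by
        rw [hra, hrb, mul_one, one_mul]
    _ = resolvent a r * (a * j - j * b + (j * algebraMap R 𝔄 r - algebraMap R 𝔄 r * j))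
          * resolvent b r := by noncomm_ring
    _ = resolvent a r * (a * j - j * b) * resolvent b r := by
        rw [Algebra.commutes, sub_self, add_zero]

variable {𝔄 : Type*} [CStarAlgebra 𝔄] {A B : 𝔄} {w : ℂ}

lemma sub_ne_zero_of_mem_spectrum (hA : IsSelfAdjoint A) (hw : w.im ≠ 0) :
    ∀ z ∈ spectrum ℂ A, w - z ≠ 0 := fun z hz h ↦
  hw (by rw [sub_eq_zero.mp h, hA.im_eq_zero_of_mem_spectrum hz])

lemma mem_resolventSet_of_im_ne_zero (hA : IsSelfAdjoint A) (hw : w.im ≠ 0) :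
    w ∈ resolventSet ℂ A := by
  by_contra h
  exact hw (hA.im_eq_zero_of_mem_spectrum h)

lemma resolvent_eq_cfc (hA : IsSelfAdjoint A) (hw : w.im ≠ 0) :
    resolvent A w = cfc (fun z : ℂ ↦ (w - z)⁻¹) A := by
  have : IsStarNormal A := hA.isStarNormal
  rw [cfc_inv _ A (sub_ne_zero_of_mem_spectrum hA hw), cfc_sub .., cfc_const .., cfc_id' ..,
    resolvent]

lemma norm_resolvent_le (hA : IsSelfAdjoint A) (hw : w.im ≠ 0) :
    ‖resolvent A w‖ ≤ |w.im|⁻¹ := by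
  rw [resolvent_eq_cfc hA hw]
  refine norm_cfc_le (by positivity) fun z hz ↦ ?_
  rw [norm_inv]
  gcongr
  simpa [hA.im_eq_zero_of_mem_spectrum hz] using Complex.abs_im_le_norm (w - z)

lemma norm_resolvent_mul_sub_mul_resolvent_le (hA : IsSelfAdjoint A) (hB : IsSelfAdjoint B)
    (hw : w.im ≠ 0) (J : 𝔄) :
    ‖resolvent A w * J - J * resolvent B w‖ ≤ ‖A * J - J * B‖ / w.im ^ 2 := by
  rw [resolvent_mul_sub_mul_resolvent (mem_resolventSet_of_im_ne_zero hA hw)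
    (mem_resolventSet_of_im_ne_zero hB hw)]
  calc _ ≤ ‖resolvent A w‖ * ‖A * J - J * B‖ * ‖resolvent B w‖ := norm_mul₃_le
    _ ≤ |w.im|⁻¹ * ‖A * J - J * B‖ * |w.im|⁻¹ := by
        gcongr
        exacts [norm_resolvent_le hA hw, norm_resolvent_le hB hw]
    _ = ‖A * J - J * B‖ / w.im ^ 2 := by rw [← sq_abs]; field_simp

lemma cfc_re_div_sub (hA : IsSelfAdjoint A) (hw : w.im ≠ 0) (c : ℂ) :
    cfc (fun x : ℝ ↦ (c / (w - x)).re) A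
      = (1 / 2 : ℂ) • (c • resolvent A w + conj c • resolvent A (conj w)) := by
  have : IsStarNormal A := hA.isStarNormal
  have hw' : (conj w).im ≠ 0 := by simpa using hw
  have hcont : ContinuousOn (fun z : ℂ ↦ (w - z)⁻¹) (spectrum ℂ A) :=
    ContinuousOn.inv₀ (by fun_prop) (sub_ne_zero_of_mem_spectrum hA hw)
  have hcont' : ContinuousOn (fun z : ℂ ↦ (conj w - z)⁻¹) (spectrum ℂ A) :=
    ContinuousOn.inv₀ (by fun_prop) (sub_ne_zero_of_mem_spectrum hA hw')
  calc cfc (fun x : ℝ ↦ (c / (w - x)).re) A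
      = cfc (fun z : ℂ ↦ (1 / 2 : ℂ) * (c * (w - z)⁻¹ + conj c * (conj w - z)⁻¹)) A := by
        rw [cfc_real_eq_complex]
        refine cfc_congr fun z hz ↦ ?_
        have hre : (z.re : ℂ) = z := (hA.mem_spectrum_eq_re hz).symm
        simp only [hre, Complex.re_eq_add_conj, map_div₀, map_sub, Complex.conj_eq_iff_re.mpr hre]
        ring
    _ = (1 / 2 : ℂ) • (c • resolvent A w + conj c • resolvent A (conj w)) := by
        rw [resolvent_eq_cfc hA hw, resolvent_eq_cfc hA hw', ← cfc_const_mul c _ A hcont,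
          ← cfc_const_mul (conj c) _ A hcont', ← cfc_add A _ _ (by fun_prop) (by fun_prop),
          ← cfc_const_mul _ _ A (by fun_prop)]

end Resolvent

section OperatorLipschitz

/-- `f` is operator Lipschitz on `𝔄` with constant `L`, in the quasi-commutator form: the bound is
asked of `f(A) J - J f(B)` for every `J`, the case `J = 1` being the usual Lipschitz bound. -/
def OperatorLipschitzWith (𝔄 : Type*) [CStarAlgebra 𝔄] (L : ℝ) (f : ℝ → ℝ) : Prop :=
  ∀ ⦃A B : 𝔄⦄, IsSelfAdjoint A → IsSelfAdjoint B → ∀ J : 𝔄,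
    ‖cfc f A * J - J * cfc f B‖ ≤ L * ‖A * J - J * B‖

namespace OperatorLipschitzWith
variable {𝔄 : Type*} [CStarAlgebra 𝔄] {f g : ℝ → ℝ} {L M : ℝ}

lemma mono (hf : OperatorLipschitzWith 𝔄 L f) (hLM : L ≤ M) : OperatorLipschitzWith 𝔄 M f :=
  fun _ _ hA hB J ↦ (hf hA hB J).trans (by gcongr)

lemma add (hf : OperatorLipschitzWith 𝔄 L f) (hg : OperatorLipschitzWith 𝔄 M g)
    (hfc : Continuous f) (hgc : Continuous g) :
    OperatorLipschitzWith 𝔄 (L + M) (fun x ↦ f x + g x) := fun A B hA hB J ↦ by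
  rw [cfc_add .., cfc_add .., add_mul, mul_add, add_sub_add_comm, add_mul]
  exact norm_add_le_of_le (hf hA hB J) (hg hA hB J)

lemma const_mul (hf : OperatorLipschitzWith 𝔄 L f) (hfc : Continuous f) (c : ℝ) :
    OperatorLipschitzWith 𝔄 (|c| * L) (fun x ↦ c * f x) := fun A B hA hB J ↦ by
  rw [cfc_const_mul .., cfc_const_mul .., smul_mul_assoc, mul_smul_comm, ← smul_sub, norm_smul,
    Real.norm_eq_abs, mul_assoc]
  gcongr
  exact hf hA hB J

lemma re_div_sub (c : ℂ) {w : ℂ} (hw : w.im ≠ 0) :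
    OperatorLipschitzWith 𝔄 (‖c‖ / w.im ^ 2) (fun x ↦ (c / (w - x)).re) := fun A B hA hB J ↦ by
  have hw' : (conj w).im ≠ 0 := by simpa using hw
  calc _ = ‖(1 / 2 : ℂ) • (c • (resolvent A w * J - J * resolvent B w)
          + conj c • (resolvent A (conj w) * J - J * resolvent B (conj w)))‖ := by
        rw [cfc_re_div_sub hA hw, cfc_re_div_sub hB hw]
        simp only [smul_mul_assoc, mul_smul_comm, add_mul, mul_add, smul_sub, smul_add]
        abel_nf
    _ ≤ 1 / 2 * (‖c‖ * (‖A * J - J * B‖ / w.im ^ 2) + ‖c‖ * (‖A * J - J * B‖ / w.im ^ 2)) := by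
        rw [norm_smul, show ‖(1 / 2 : ℂ)‖ = 1 / 2 by simp]
        gcongr
        refine norm_add_le_of_le ?_ ?_
        · rw [norm_smul]
          gcongr
          exact norm_resolvent_mul_sub_mul_resolvent_le hA hB hw J
        · rw [norm_smul, RCLike.norm_conj]
          gcongr
          simpa using norm_resolvent_mul_sub_mul_resolvent_le hA hB hw' J
    _ = ‖c‖ / w.im ^ 2 * ‖A * J - J * B‖ := by ring

lemma setIntegral {s : Set ℝ} (hs : MeasurableSet s) {k : ℝ → ℝ → ℝ} {ℓ bound : ℝ → ℝ}
    (hk : ∀ t ∈ s, OperatorLipschitzWith 𝔄 (ℓ t) (k t))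
    (hcont : ContinuousOn (Function.uncurry k) (s ×ˢ univ))
    (hbound : ∀ t ∈ s, ∀ x, |k t x| ≤ bound t)
    (hbound_int : IntegrableOn bound s) (hℓ : IntegrableOn ℓ s) :
    OperatorLipschitzWith 𝔄 (∫ t in s, ℓ t) (fun x ↦ ∫ t in s, k t x) := fun A B hA hB J ↦ by
  have cont_cfc (X : 𝔄) : ContinuousOn (Function.uncurry k) (s ×ˢ spectrum ℝ X) :=
    hcont.mono (prod_mono_right (subset_univ _))
  have bound_cfc (X : 𝔄) : ∀ᵐ t ∂volume.restrict s, ∀ x ∈ spectrum ℝ X, ‖k t x‖ ≤ bound t :=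
    ae_restrict_of_forall_mem hs fun t ht x _ ↦ hbound t ht x
  have integrable_cfc (X : 𝔄) (hX : IsSelfAdjoint X) : IntegrableOn (fun t ↦ cfc (k t) X) s :=
    integrableOn_cfc hs k bound X (cont_cfc X) (bound_cfc X) hbound_int.2
  have cfc_integral (X : 𝔄) (hX : IsSelfAdjoint X) :
      cfc (fun x ↦ ∫ t in s, k t x) X = ∫ t in s, cfc (k t) X :=
    cfc_setIntegral hs k bound X (cont_cfc X) (bound_cfc X) hbound_int.2
  rw [cfc_integral A hA, cfc_integral B hB,
    ← integral_mul_const_of_integrable (integrable_cfc A hA),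
    ← integral_const_mul_of_integrable (integrable_cfc B hB),
    ← integral_sub ((integrable_cfc A hA).mul_const J) ((integrable_cfc B hB).const_mul J),
    ← integral_mul_const]
  exact norm_integral_le_of_norm_le (hℓ.mul_const _)
    (ae_restrict_of_forall_mem hs fun t ht ↦ hk t ht hA hB J)

end OperatorLipschitzWith
end OperatorLipschitz

section HelfferSjostrand

/-- The almost analytic extension of `f` of order three, at the point `u + iv`: the Taylor
polynomial of degree two of `f` at `u`, evaluated at the complex increment `iv`. -/
noncomputable def almostAnalyticExtension (f : ℝ → ℝ) (u v : ℝ) : ℂ :=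
  f u + iteratedDeriv 1 f u * (v * I) + iteratedDeriv 2 f u * (v * I) ^ 2 / 2

/-- The contribution of the vertical segment of height `h` above `u` to the area integral in the
Helffer–Sjöstrand formula: `∂̄` of the almost analytic extension is a multiple of `v² f‴(u)`. -/
noncomputable def areaKernel (h u x : ℝ) : ℝ :=
  ∫ v in Ioc 0 h, ((v : ℂ) ^ 2 / (u + v * I - x)).re

/-- The coefficient `i F(w) dw/du` of the Cauchy kernel along the graph `w = u + i b(u)`, where `F`
is the almost analytic extension of `f`. -/
noncomputable def boundaryCoeff (f b : ℝ → ℝ) (u : ℝ) : ℂ :=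
  (I - deriv b u) * almostAnalyticExtension f u (b u)

/-- The integrand in `u` of the Helffer–Sjöstrand formula for `π f(x)` on the region
`0 < v < b(u)` of the upper half-plane: area term plus boundary term. -/
noncomputable def helfferSjostrandDensity (f b : ℝ → ℝ) (u x : ℝ) : ℝ :=
  iteratedDeriv 3 f u / 2 * areaKernel (b u) u x
    + (boundaryCoeff f b u / (u + b u * I - x)).re

/-- A primitive in `u` of the Helffer–Sjöstrand density, valid to the right of the pole `x` for
`c = π / 2` and to the left of it for `c = -π / 2`. Its existence reduces Stokes' theorem on the
region below the graph of `b` to the fundamental theorem of calculus on two half-lines. -/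
noncomputable def helfferSjostrandPrimitive (f b : ℝ → ℝ) (x c u : ℝ) : ℝ :=
  f u * (Real.arctan ((u - x) / b u) - c)
    - iteratedDeriv 1 f u * (b u + (u - x) * (Real.arctan ((u - x) / b u) - c))
    + iteratedDeriv 2 f u / 2 * ((u - x) * b u + (u - x) ^ 2 * (Real.arctan ((u - x) / b u) - c))

lemma add_mul_I_sub_ne_zero (u : ℝ) {v : ℝ} (hv : v ≠ 0) (x : ℝ) : (u + v * I - x : ℂ) ≠ 0 :=
  fun h ↦ hv (by simpa using congrArg im h)

lemma re_div_add_mul_I_sub (z : ℂ) (u v x : ℝ) :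
    (z / (u + v * I - x)).re = (z.re * (u - x) + z.im * v) / ((u - x) ^ 2 + v ^ 2) := by
  rw [div_re, ← add_div]
  simp [normSq_apply, sq]

lemma abs_re_div_add_mul_I_sub_le (z : ℂ) (u : ℝ) {v : ℝ} (hv : 0 < v) (x : ℝ) :
    |(z / (u + v * I - x)).re| ≤ ‖z‖ / v := by
  calc |(z / (u + v * I - x)).re| ≤ ‖z‖ / ‖(u + v * I - x : ℂ)‖ :=
        (abs_re_le_norm _).trans (norm_div _ _).le
    _ ≤ ‖z‖ / v := by
        gcongr
        simpa [abs_of_pos hv] using abs_im_le_norm (u + v * I - x : ℂ)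

lemma abs_re_sq_div_add_mul_I_sub_le (u : ℝ) {v : ℝ} (hv : 0 < v) (x : ℝ) :
    |((v : ℂ) ^ 2 / (u + v * I - x)).re| ≤ v :=
  (abs_re_div_add_mul_I_sub_le _ u hv x).trans_eq (by simp [sq])

lemma hasDerivAt_mul_sub_sq_mul_arctan_div (a v : ℝ) :
    HasDerivAt (fun v ↦ a * v - a ^ 2 * Real.arctan (v / a)) (a * v ^ 2 / (a ^ 2 + v ^ 2)) v := by
  obtain rfl | ha := eq_or_ne a 0
  · simpa using hasDerivAt_const v (0 : ℝ)
  · refine (((hasDerivAt_id v).const_mul a).sub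
      (((hasDerivAt_id v).div_const a).arctan.const_mul (a ^ 2))).congr_deriv ?_
    simp only [id]
    field_simp
    ring

lemma sq_mul_arctan_div {a h : ℝ} (hh : 0 < h) :
    a ^ 2 * Real.arctan (h / a) = π / 2 * (a * |a|) - a ^ 2 * Real.arctan (a / h) := by
  rw [← inv_div a h]
  obtain ha | rfl | ha := lt_trichotomy a 0
  · rw [Real.arctan_inv_of_neg (div_neg_of_neg_of_pos ha hh), abs_of_neg ha]
    ring
  · simp
  · rw [Real.arctan_inv_of_pos (by positivity), abs_of_pos ha]
    ring

lemma areaKernel_eq {h : ℝ} (hh : 0 < h) (u x : ℝ) :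
    areaKernel h u x = (u - x) * h + (u - x) ^ 2 * Real.arctan ((u - x) / h)
      - π / 2 * ((u - x) * |u - x|) := by
  set a := u - x
  have re_eq (v : ℝ) : ((v : ℂ) ^ 2 / (u + v * I - x)).re = a * v ^ 2 / (a ^ 2 + v ^ 2) := by
    rw [re_div_add_mul_I_sub, ← ofReal_pow, ofReal_re, ofReal_im, zero_mul, add_zero, mul_comm]
  have hint : IntervalIntegrable (fun v ↦ a * v ^ 2 / (a ^ 2 + v ^ 2)) volume 0 h := by
    obtain ha₀ | ha₀ := eq_or_ne a 0
    · simp [ha₀]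
    · have : Continuous fun v ↦ a * v ^ 2 / (a ^ 2 + v ^ 2) :=
        .div (by fun_prop) (by fun_prop) fun v ↦ by positivity
      exact this.intervalIntegrable _ _
  rw [areaKernel, ← intervalIntegral.integral_of_le hh.le]
  simp only [re_eq]
  rw [intervalIntegral.integral_eq_sub_of_hasDerivAt
    (fun v _ ↦ hasDerivAt_mul_sub_sq_mul_arctan_div a v) hint,
    sq_mul_arctan_div hh, zero_div, Real.arctan_zero]
  ring

lemma abs_areaKernel_le {h : ℝ} (hh : 0 ≤ h) (u x : ℝ) : |areaKernel h u x| ≤ h ^ 2 := by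
  have bound : ∀ v ∈ Ioc 0 h, ‖((v : ℂ) ^ 2 / (u + v * I - x)).re‖ ≤ h := fun v hv ↦
    (abs_re_sq_div_add_mul_I_sub_le u hv.1 x).trans hv.2
  simpa [areaKernel, hh, sq] using
    norm_setIntegral_le_of_norm_le_const (μ := volume) measure_Ioc_lt_top bound

variable {f b : ℝ → ℝ} {x u : ℝ}

lemma iteratedDeriv_eq_zero_of_notMem_tsupport {l : ℕ} (hu : u ∉ tsupport f) :
    iteratedDeriv l f u = 0 := by
  rw [(notMem_tsupport_iff_eventuallyEq.mp hu).iteratedDeriv_eq]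
  simp

lemma boundaryCoeff_eq_zero (hu : u ∉ tsupport f) :
    boundaryCoeff f b u = 0 := by
  simp [boundaryCoeff, almostAnalyticExtension, image_eq_zero_of_notMem_tsupport hu,
    iteratedDeriv_eq_zero_of_notMem_tsupport hu]

lemma contDiff_helfferSjostrandPrimitive (hf : ContDiff ℝ 3 f) (hb : ContDiff ℝ 1 b)
    (hb₀ : ∀ u, 0 < b u) (x c : ℝ) : ContDiff ℝ 1 (helfferSjostrandPrimitive f b x c) := by
  have h0 : ContDiff ℝ 1 f := hf.of_le (by norm_num)
  have h1 : ContDiff ℝ 1 (iteratedDeriv 1 f) := by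
    rw [iteratedDeriv_eq_iterate]
    exact ContDiff.iterate_deriv' 1 1 (hf.of_le (by norm_num))
  have h2 : ContDiff ℝ 1 (iteratedDeriv 2 f) := by
    rw [iteratedDeriv_eq_iterate]
    exact hf.iterate_deriv' 1 2
  have h3 : ContDiff ℝ 1 (fun u ↦ Real.arctan ((u - x) / b u)) :=
    ((contDiff_id.sub contDiff_const).div hb fun u ↦ (hb₀ u).ne').arctan
  unfold helfferSjostrandPrimitive
  fun_prop

lemma boundaryCoeff_eq_mk (f b : ℝ → ℝ) (u : ℝ) :
    boundaryCoeff f b u =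
      ⟨-(iteratedDeriv 1 f u * b u) - deriv b u * (f u - iteratedDeriv 2 f u * b u ^ 2 / 2),
        f u - iteratedDeriv 2 f u * b u ^ 2 / 2 - deriv b u * (iteratedDeriv 1 f u * b u)⟩ := by
  rw [mk_eq_add_mul_I, boundaryCoeff, almostAnalyticExtension]
  push_cast
  linear_combination (iteratedDeriv 1 f u * b u
    + (I - deriv b u) * (iteratedDeriv 2 f u * b u ^ 2 / 2) : ℂ) * I_sq

lemma hasDerivAt_helfferSjostrandPrimitive {c : ℝ} (hf : ContDiff ℝ 3 f)
    (hb : DifferentiableAt ℝ b u) (hb₀ : 0 < b u)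
    (hc : c * (u - x) ^ 2 = π / 2 * ((u - x) * |u - x|)) :
    HasDerivAt (helfferSjostrandPrimitive f b x c) (helfferSjostrandDensity f b u x) u := by
  have hasDerivAt_iterate (l : ℕ) (hl : l < 3) :
      HasDerivAt (iteratedDeriv l f) (iteratedDeriv (l + 1) f u) u := by
    rw [iteratedDeriv_succ]
    exact (hf.differentiable_iteratedDeriv l (mod_cast hl) u).hasDerivAt
  have hf₀ : HasDerivAt f (iteratedDeriv 1 f u) u := by
    simpa using hasDerivAt_iterate 0 (by norm_num)
  have hf₁ := hasDerivAt_iterate 1 (by norm_num)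
  have hf₂ := hasDerivAt_iterate 2 (by norm_num)
  have ha : HasDerivAt (fun u ↦ u - x) 1 u := (hasDerivAt_id u).sub_const x
  have hφ := ((ha.div hb.hasDerivAt hb₀.ne').arctan).sub_const c
  refine (((hf₀.mul hφ).sub (hf₁.mul (hb.hasDerivAt.add (ha.mul hφ)))).add
    ((hf₂.div_const 2).mul ((ha.mul hb.hasDerivAt).add ((ha.pow 2).mul hφ)))).congr_deriv ?_
  rw [helfferSjostrandDensity, areaKernel_eq hb₀, ← hc, boundaryCoeff_eq_mk,
    re_div_add_mul_I_sub]
  simp only [Pi.mul_apply, Pi.add_apply, Pi.pow_apply, Pi.div_apply]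
  field_simp
  ring

lemma hasCompactSupport_helfferSjostrandPrimitive (hf : HasCompactSupport f) (x c : ℝ) :
    HasCompactSupport (helfferSjostrandPrimitive f b x c) :=
  HasCompactSupport.intro hf.isCompact fun u hu ↦ by
    simp [helfferSjostrandPrimitive, image_eq_zero_of_notMem_tsupport hu,
      iteratedDeriv_eq_zero_of_notMem_tsupport hu]

lemma continuous_almostAnalyticExtension (hf : ContDiff ℝ 2 f) :
    Continuous (Function.uncurry (almostAnalyticExtension f)) := by
  have h₀ := hf.continuous
  have h₁ : Continuous (iteratedDeriv 1 f) := hf.continuous_iteratedDeriv 1 (by norm_num)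
  have : Continuous (iteratedDeriv 2 f) := hf.continuous_iteratedDeriv 2 le_rfl
  unfold almostAnalyticExtension Function.uncurry
  fun_prop

lemma continuous_boundaryCoeff (hf : ContDiff ℝ 2 f) (hb : ContDiff ℝ 1 b) :
    Continuous (boundaryCoeff f b) := by
  have : Continuous (deriv b) := hb.continuous_deriv le_rfl
  have hext : Continuous fun u ↦ almostAnalyticExtension f u (b u) :=
    (continuous_almostAnalyticExtension hf).comp (continuous_id.prodMk hb.continuous)
  unfold boundaryCoeff
  fun_prop

lemma continuous_areaKernel (hb : Continuous b) (hb₀ : ∀ u, 0 < b u) :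
    Continuous fun p : ℝ × ℝ ↦ areaKernel (b p.1) p.1 p.2 := by
  simp only [areaKernel_eq (hb₀ _)]
  have : Continuous fun p : ℝ × ℝ ↦ (p.1 - p.2) / b p.1 :=
    Continuous.div (by fun_prop) (by fun_prop) fun p ↦ (hb₀ p.1).ne'
  fun_prop

lemma continuous_helfferSjostrandDensity (hf : ContDiff ℝ 3 f) (hb : ContDiff ℝ 1 b)
    (hb₀ : ∀ u, 0 < b u) : Continuous (Function.uncurry (helfferSjostrandDensity f b)) := by
  have hf₃ : Continuous (iteratedDeriv 3 f) := hf.continuous_iteratedDeriv 3 le_rfl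
  have hcoeff := continuous_boundaryCoeff (hf.of_le (by norm_num)) hb
  have harea := continuous_areaKernel hb.continuous hb₀
  have hbc := hb.continuous
  have hdiv : Continuous fun p : ℝ × ℝ ↦
      boundaryCoeff f b p.1 / (p.1 + b p.1 * I - p.2) :=
    Continuous.div (by fun_prop) (by fun_prop) fun p ↦
      add_mul_I_sub_ne_zero p.1 (hb₀ p.1).ne' p.2
  exact (((hf₃.comp continuous_fst).div_const 2).mul harea).add (Complex.continuous_re.comp hdiv)

lemma integrable_helfferSjostrandDensity (hf : ContDiff ℝ 3 f) (hfs : HasCompactSupport f)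
    (hb : ContDiff ℝ 1 b) (hb₀ : ∀ u, 0 < b u) (x : ℝ) :
    Integrable (fun u ↦ helfferSjostrandDensity f b u x) := by
  have hcont : Continuous fun u ↦ helfferSjostrandDensity f b u x :=
    (continuous_helfferSjostrandDensity hf hb hb₀).uncurry_right x
  refine hcont.integrable_of_hasCompactSupport (.intro hfs.isCompact fun u hu ↦ ?_)
  simp [helfferSjostrandDensity, iteratedDeriv_eq_zero_of_notMem_tsupport hu,
    boundaryCoeff_eq_zero hu]

lemma integral_helfferSjostrandDensity (hf : ContDiff ℝ 3 f) (hfs : HasCompactSupport f)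
    (hb : ContDiff ℝ 1 b) (hb₀ : ∀ u, 0 < b u) (x : ℝ) :
    ∫ u, helfferSjostrandDensity f b u x = π * f x := by
  have hint := integrable_helfferSjostrandDensity hf hfs hb hb₀ x
  have hasDerivAt {c u : ℝ} := hasDerivAt_helfferSjostrandPrimitive (x := x) (c := c) hf
    (hb.differentiable one_ne_zero u) (hb₀ u)
  have left : ∫ u in Iic x, helfferSjostrandDensity f b u x
      = helfferSjostrandPrimitive f b x (-(π / 2)) x := by
    rw [← (hasCompactSupport_helfferSjostrandPrimitive hfs x _).integral_Iic_deriv_eq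
      (contDiff_helfferSjostrandPrimitive hf hb hb₀ x _) x]
    refine setIntegral_congr_fun measurableSet_Iic fun u hu ↦ (hasDerivAt ?_).deriv.symm
    rw [abs_of_nonpos (sub_nonpos.mpr hu)]
    ring
  have right : ∫ u in Ioi x, helfferSjostrandDensity f b u x
      = -helfferSjostrandPrimitive f b x (π / 2) x := by
    rw [← (hasCompactSupport_helfferSjostrandPrimitive hfs x _).integral_Ioi_deriv_eq
      (contDiff_helfferSjostrandPrimitive hf hb hb₀ x _) x]
    refine setIntegral_congr_fun measurableSet_Ioi fun u hu ↦ (hasDerivAt ?_).deriv.symm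
    rw [abs_of_pos (sub_pos.mpr hu)]
    ring
  rw [← intervalIntegral.integral_Iic_add_Ioi hint.integrableOn hint.integrableOn, left, right]
  simp only [helfferSjostrandPrimitive, sub_self, zero_div, Real.arctan_zero]
  ring

end HelfferSjostrand

section HelfferSjostrandLipschitz

variable {𝔄 : Type*} [CStarAlgebra 𝔄] {f b : ℝ → ℝ}

lemma operatorLipschitzWith_areaKernel {h : ℝ} (hh : 0 ≤ h) (u : ℝ) :
    OperatorLipschitzWith 𝔄 h (areaKernel h u) := by
  have h_lip : OperatorLipschitzWith 𝔄 (∫ _ in Ioc 0 h, (1 : ℝ)) (areaKernel h u) := by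
    refine .setIntegral measurableSet_Ioc (bound := id) (fun v hv ↦ ?_) ?_
      (fun v hv ↦ abs_re_sq_div_add_mul_I_sub_le u hv.1)
      continuous_id.integrableOn_Ioc continuous_const.integrableOn_Ioc
    · have hv₀ : (u + v * I : ℂ).im ≠ 0 := by simpa using hv.1.ne'
      refine (OperatorLipschitzWith.re_div_sub ((v : ℂ) ^ 2) hv₀).mono ?_
      simp [div_self_le_one]
    · refine continuous_re.comp_continuousOn (ContinuousOn.div (by fun_prop) (by fun_prop) ?_)
      exact fun p hp ↦ add_mul_I_sub_ne_zero u hp.1.1.ne' p.2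
  simpa [hh] using h_lip

lemma operatorLipschitzWith_helfferSjostrandDensity (hb : Continuous b) (hb₀ : ∀ u, 0 < b u)
    (u : ℝ) :
    OperatorLipschitzWith 𝔄
      (|iteratedDeriv 3 f u| / 2 * b u + ‖boundaryCoeff f b u‖ / b u ^ 2)
      (helfferSjostrandDensity f b u) := by
  have him : (u + b u * I : ℂ).im ≠ 0 := by simpa using (hb₀ u).ne'
  have harea : Continuous (areaKernel (b u) u) :=
    (continuous_areaKernel hb hb₀).comp (continuous_const.prodMk continuous_id)
  have hdiv : Continuous fun x : ℝ ↦ (boundaryCoeff f b u / (u + b u * I - x)).re :=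
    continuous_re.comp (Continuous.div (by fun_prop) (by fun_prop) fun x ↦
      add_mul_I_sub_ne_zero u (hb₀ u).ne' x)
  have hlip := ((operatorLipschitzWith_areaKernel (𝔄 := 𝔄) (hb₀ u).le u).const_mul harea
    (iteratedDeriv 3 f u / 2)).add (.re_div_sub (boundaryCoeff f b u) him)
    (by fun_prop) hdiv
  exact hlip.mono (by simp [abs_div])

lemma abs_helfferSjostrandDensity_le (hb₀ : 0 < b u) (x : ℝ) :
    |helfferSjostrandDensity f b u x|
      ≤ |iteratedDeriv 3 f u| / 2 * b u ^ 2 + ‖boundaryCoeff f b u‖ / b u := by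
  refine (abs_add_le _ _).trans (add_le_add ?_ ?_)
  · rw [abs_mul, abs_div, abs_two]
    gcongr
    exact abs_areaKernel_le hb₀.le u x
  · exact abs_re_div_add_mul_I_sub_le _ u hb₀ x

lemma OperatorLipschitzWith.of_helfferSjostrand (hf : ContDiff ℝ 3 f) (hfs : HasCompactSupport f)
    (hb : ContDiff ℝ 1 b) (hb₀ : ∀ u, 0 < b u) :
    OperatorLipschitzWith 𝔄
      (π⁻¹ * ∫ u, (|iteratedDeriv 3 f u| / 2 * b u + ‖boundaryCoeff f b u‖ / b u ^ 2)) f := by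
  have : Continuous (iteratedDeriv 3 f) := hf.continuous_iteratedDeriv 3 le_rfl
  have hcoeff := continuous_boundaryCoeff (hf.of_le (by norm_num)) hb
  have hbc := hb.continuous
  have integrable_weighted (k l : ℕ) : Integrable fun u ↦
      |iteratedDeriv 3 f u| / 2 * b u ^ k + ‖boundaryCoeff f b u‖ / b u ^ l :=
    Continuous.integrable_of_hasCompactSupport
      (.add (by fun_prop) (.div (by fun_prop) (by fun_prop) fun u ↦ (pow_pos (hb₀ u) l).ne'))
      (.intro hfs.isCompact fun u hu ↦ by
        simp [iteratedDeriv_eq_zero_of_notMem_tsupport hu, boundaryCoeff_eq_zero hu])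
  have hlip := OperatorLipschitzWith.setIntegral (𝔄 := 𝔄) MeasurableSet.univ
    (fun u _ ↦ operatorLipschitzWith_helfferSjostrandDensity hb.continuous hb₀ u)
    (continuous_helfferSjostrandDensity hf hb hb₀).continuousOn
    (fun u _ ↦ abs_helfferSjostrandDensity_le (hb₀ u))
    (by simpa using integrable_weighted 2 1) (by simpa using integrable_weighted 1 2)
  simp only [setIntegral_univ, integral_helfferSjostrandDensity hf hfs hb hb₀] at hlip
  simpa [abs_of_pos Real.pi_pos, Real.pi_ne_zero] using
    hlip.const_mul (hf.continuous.const_mul π) π⁻¹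

end HelfferSjostrandLipschitz

section Nseminorm
variable {f : ℝ → ℝ} {n : ℕ}

/-- The Japanese bracket `⟨x⟩ = √(1 + x²)`, the height of the region of integration in the
Helffer–Sjöstrand formula used here. -/
noncomputable def japaneseBracket (x : ℝ) : ℝ := √(1 + x ^ 2)

lemma japaneseBracket_pos (x : ℝ) : 0 < japaneseBracket x :=
  Real.sqrt_pos.mpr (by positivity)

lemma contDiff_japaneseBracket : ContDiff ℝ 1 japaneseBracket :=
  ContDiff.sqrt (by fun_prop) fun x ↦ by positivity

lemma hasDerivAt_japaneseBracket (x : ℝ) :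
    HasDerivAt japaneseBracket (x / japaneseBracket x) x := by
  refine ((((hasDerivAt_id x).pow 2).const_add 1).sqrt
    (add_pos_of_pos_of_nonneg one_pos (sq_nonneg x)).ne').congr_deriv ?_
  simp [japaneseBracket, mul_div_mul_left]

lemma abs_deriv_japaneseBracket_le (x : ℝ) : |deriv japaneseBracket x| ≤ 1 := by
  rw [(hasDerivAt_japaneseBracket x).deriv, abs_div, abs_of_pos (japaneseBracket_pos x)]
  exact div_le_one_of_le₀ (Real.abs_le_sqrt (by linarith)) (japaneseBracket_pos x).le

lemma norm_boundaryCoeff_le (f b : ℝ → ℝ) (u : ℝ) :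
    ‖boundaryCoeff f b u‖ ≤ (1 + |deriv b u|) *
      (|f u| + |iteratedDeriv 1 f u| * |b u| + |iteratedDeriv 2 f u| * |b u| ^ 2 / 2) := by
  rw [boundaryCoeff, norm_mul]
  gcongr
  · simpa using norm_sub_le I ((deriv b u : ℝ) : ℂ)
  · refine norm_add₃_le.trans_eq ?_
    simp

lemma Nseminorm_eq_integral_sum (n : ℕ) (f : ℝ → ℝ) :
    Nseminorm n f = ∫ x, ∑ l ∈ Finset.range (n + 1),
      |iteratedDeriv l f x| * japaneseBracket x ^ ((l : ℤ) - 2) := by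
  refine integral_congr_ae (.of_forall fun x ↦ ?_)
  change (∑ l ∈ Finset.range (n + 1), |iteratedDeriv l f x| * japaneseBracket x ^ ((l : ℤ) - n))
    * japaneseBracket x ^ ((n : ℤ) - 2) = _
  simp only [Finset.sum_mul, mul_assoc, ← zpow_add₀ (japaneseBracket_pos x).ne', sub_add_sub_cancel]

lemma integrable_sum_iteratedDeriv_mul_zpow (hf : ContDiff ℝ n f) (hfs : HasCompactSupport f) :
    Integrable fun x ↦ ∑ l ∈ Finset.range (n + 1),
      |iteratedDeriv l f x| * japaneseBracket x ^ ((l : ℤ) - 2) := by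
  refine integrable_finsetSum _ fun l hl ↦ Continuous.integrable_of_hasCompactSupport ?_
    (.intro hfs.isCompact fun x hx ↦ by simp [iteratedDeriv_eq_zero_of_notMem_tsupport hx])
  have hl : l ≤ n := Nat.lt_succ_iff.mp (Finset.mem_range.mp hl)
  exact (hf.continuous_iteratedDeriv l (mod_cast hl)).abs.mul
    (contDiff_japaneseBracket.continuous.zpow₀ _ fun x ↦ .inl (japaneseBracket_pos x).ne')

lemma Nseminorm_nonneg (n : ℕ) (f : ℝ → ℝ) : 0 ≤ Nseminorm n f :=
  integral_nonneg fun x ↦ by positivity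

lemma Nseminorm_mono {m : ℕ} (hmn : m ≤ n) (hf : ContDiff ℝ n f) (hfs : HasCompactSupport f) :
    Nseminorm m f ≤ Nseminorm n f := by
  simp only [Nseminorm_eq_integral_sum]
  refine integral_mono (integrable_sum_iteratedDeriv_mul_zpow (hf.of_le (mod_cast hmn)) hfs)
    (integrable_sum_iteratedDeriv_mul_zpow hf hfs) fun x ↦ ?_
  exact Finset.sum_le_sum_of_subset_of_nonneg (by gcongr) fun l _ _ ↦
    mul_nonneg (abs_nonneg _) (zpow_pos (japaneseBracket_pos x) _).le

lemma boundaryCoeff_japaneseBracket_le (f : ℝ → ℝ) (u : ℝ) :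
    |iteratedDeriv 3 f u| / 2 * japaneseBracket u
        + ‖boundaryCoeff f japaneseBracket u‖ / japaneseBracket u ^ 2
      ≤ 2 * ∑ l ∈ Finset.range 4, |iteratedDeriv l f u| * japaneseBracket u ^ ((l : ℤ) - 2) := by
  have hu := japaneseBracket_pos u
  have hcoeff : ‖boundaryCoeff f japaneseBracket u‖ ≤ 2 *
      (|f u| + |iteratedDeriv 1 f u| * japaneseBracket u
        + |iteratedDeriv 2 f u| * japaneseBracket u ^ 2 / 2) := by
    refine (norm_boundaryCoeff_le f _ u).trans ?_
    rw [abs_of_pos hu]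
    gcongr
    linarith [abs_deriv_japaneseBracket_le u]
  calc _ ≤ |iteratedDeriv 3 f u| / 2 * japaneseBracket u + 2 *
      (|f u| + |iteratedDeriv 1 f u| * japaneseBracket u
        + |iteratedDeriv 2 f u| * japaneseBracket u ^ 2 / 2) / japaneseBracket u ^ 2 := by
        gcongr
    _ = 2 * (|f u| / japaneseBracket u ^ 2 + |iteratedDeriv 1 f u| / japaneseBracket u
          + |iteratedDeriv 2 f u| / 2 + |iteratedDeriv 3 f u| * japaneseBracket u / 4) := by
        field_simp
        ring
    _ ≤ 2 * (|f u| / japaneseBracket u ^ 2 + |iteratedDeriv 1 f u| / japaneseBracket u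
          + |iteratedDeriv 2 f u| + |iteratedDeriv 3 f u| * japaneseBracket u) := by
        gcongr
        · exact half_le_self (abs_nonneg _)
        · exact div_le_self (by positivity) (by norm_num)
    _ = _ := by simp [Finset.sum_range_succ, div_eq_mul_inv, zpow_neg]

lemma OperatorLipschitzWith.of_Nseminorm {𝔄 : Type*} [CStarAlgebra 𝔄]
    (hf : ContDiff ℝ 3 f) (hfs : HasCompactSupport f) :
    OperatorLipschitzWith 𝔄 (2 / π * Nseminorm 3 f) f := by
  refine (OperatorLipschitzWith.of_helfferSjostrand hf hfs contDiff_japaneseBracket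
    japaneseBracket_pos).mono ?_
  rw [Nseminorm_eq_integral_sum, div_eq_inv_mul, mul_assoc, ← integral_const_mul 2]
  gcongr π⁻¹ * ?_
  refine integral_mono_of_nonneg (.of_forall fun u ↦ ?_)
    ((integrable_sum_iteratedDeriv_mul_zpow hf hfs).const_mul 2)
    (.of_forall (boundaryCoeff_japaneseBracket_le f))
  have hu := japaneseBracket_pos u
  positivity

end Nseminorm

lemma conj_mul_sub_mul_conj {R : Type*} [Ring R] {p q j : R} (h : p * j = j * q) (x y : R) :
    p * x * p * j - j * (q * y * q) = p * (x * j - j * y) * q := by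
  calc _ = p * x * (p * j) - j * q * y * q := by noncomm_ring
    _ = p * x * (j * q) - p * j * y * q := by rw [← h]
    _ = p * (x * j - j * y) * q := by noncomm_ring

lemma norm_mul_mul_le_of_norm_le_one {R : Type*} [NonUnitalSeminormedRing R] {p q : R}
    (hp : ‖p‖ ≤ 1) (hq : ‖q‖ ≤ 1) (x : R) : ‖p * x * q‖ ≤ ‖x‖ :=
  calc ‖p * x * q‖ ≤ ‖p‖ * ‖x‖ * ‖q‖ := norm_mul₃_le
    _ ≤ 1 * ‖x‖ * 1 := by gcongr
    _ = ‖x‖ := by ring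

section Dop

variable {H : Type*} [NormedAddCommGroup H] [InnerProductSpace ℂ H] [CompleteSpace H]
  {A₁ A₂ P₁ P₂ J : H →L[ℂ] H} {f : ℝ → ℝ} {L : ℝ}

lemma Dop_mul_sub_mul_Dop (hJ : P₁ * J = J * P₂) :
    Dop A₁ P₁ f * J - J * Dop A₂ P₂ f
      = P₁ * (cfc f (P₁ * A₁ * P₁) * J - J * cfc f (P₂ * A₂ * P₂)) * P₂
        - P₁ * (cfc f A₁ * J - J * cfc f A₂) * P₂ := by
  rw [← conj_mul_sub_mul_conj hJ, ← conj_mul_sub_mul_conj hJ]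
  unfold Dop
  noncomm_ring

lemma OperatorLipschitzWith.norm_Dop_mul_sub_mul_Dop_le
    (hf : OperatorLipschitzWith (H →L[ℂ] H) L f) (hL : 0 ≤ L)
    (hA₁ : IsSelfAdjoint A₁) (hA₂ : IsSelfAdjoint A₂)
    (hP₁ : IsSelfAdjoint P₁) (hP₂ : IsSelfAdjoint P₂) (hP₁_le : ‖P₁‖ ≤ 1) (hP₂_le : ‖P₂‖ ≤ 1)
    (hJ : P₁ * J = J * P₂) :
    ‖Dop A₁ P₁ f * J - J * Dop A₂ P₂ f‖ ≤ 2 * L * ‖A₁ * J - J * A₂‖ := by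
  have norm_conj_le := norm_mul_mul_le_of_norm_le_one hP₁_le hP₂_le
  have compressed : ‖cfc f (P₁ * A₁ * P₁) * J - J * cfc f (P₂ * A₂ * P₂)‖
      ≤ L * ‖A₁ * J - J * A₂‖ := by
    refine (hf (hA₁.conjugate_self hP₁) (hA₂.conjugate_self hP₂) J).trans ?_
    rw [conj_mul_sub_mul_conj hJ]
    gcongr
    exact norm_conj_le _
  rw [Dop_mul_sub_mul_Dop hJ, two_mul, add_mul]
  exact norm_sub_le_of_le ((norm_conj_le _).trans compressed)
    ((norm_conj_le _).trans (hf hA₁ hA₂ J))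

end Dop

/-- For `n ≥ 3` there is `C = C(n)` such that: for bounded self-adjoint `A₁, A₂`,
bounded self-adjoint `P₁, P₂` with `‖Pᵢ‖ ≤ 1`, and a bounded `J` with
`[P₁,J] = [P₂,J] = 0` and `(P₁−P₂)J = 0`, and every compactly supported `f ∈ Cⁿ(ℝ)`:
`‖𝒟(A₁,P₁;f)J − J𝒟(A₂,P₂;f)‖ ≤ C N_n(f)(‖(A₁−A₂)J‖ + ‖[A₂,J]‖)` and
`‖J𝒟(A₁,P₁;f) − J𝒟(A₂,P₂;f)‖ ≤ C N_n(f)(‖(A₁−A₂)J‖ + ‖[A₁,J]‖ + ‖[A₂,J]‖)`. -/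
theorem Dop_quasi_commutator_bound (n : ℕ) (hn : 3 ≤ n) :
    ∃ C : ℝ, ∀ (H : Type*) [NormedAddCommGroup H] [InnerProductSpace ℂ H] [CompleteSpace H]
      (A₁ A₂ P₁ P₂ J : H →L[ℂ] H) (f : ℝ → ℝ),
      IsSelfAdjoint A₁ → IsSelfAdjoint A₂ →
      IsSelfAdjoint P₁ → IsSelfAdjoint P₂ → ‖P₁‖ ≤ 1 → ‖P₂‖ ≤ 1 →
      P₁ * J - J * P₁ = 0 → P₂ * J - J * P₂ = 0 → (P₁ - P₂) * J = 0 →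
      ContDiff ℝ n f → HasCompactSupport f →
      ‖Dop A₁ P₁ f * J - J * Dop A₂ P₂ f‖
          ≤ C * Nseminorm n f * (‖(A₁ - A₂) * J‖ + ‖A₂ * J - J * A₂‖) ∧
      ‖J * Dop A₁ P₁ f - J * Dop A₂ P₂ f‖
          ≤ C * Nseminorm n f *
            (‖(A₁ - A₂) * J‖ + ‖A₁ * J - J * A₁‖ + ‖A₂ * J - J * A₂‖) := by
  refine ⟨2 * (2 / π), ?_⟩
  intro H _ _ _ A₁ A₂ P₁ P₂ J f hA₁ hA₂ hP₁ hP₂ hP₁_le hP₂_le hc₁ hc₂ hP hf hfs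
  have hf_lip : OperatorLipschitzWith (H →L[ℂ] H) (2 / π * Nseminorm n f) f :=
    (OperatorLipschitzWith.of_Nseminorm (hf.of_le (mod_cast hn)) hfs).mono
      (by gcongr; exact Nseminorm_mono hn hf hfs)
  have hL : 0 ≤ 2 / π * Nseminorm n f := mul_nonneg (by positivity) (Nseminorm_nonneg n f)
  have hJ₁₁ : P₁ * J = J * P₁ := sub_eq_zero.mp hc₁
  have hJ₁₂ : P₁ * J = J * P₂ := by
    rw [← sub_eq_zero.mp hc₂, ← sub_eq_zero, ← sub_mul, hP]
  have hA : ‖A₁ * J - J * A₂‖ ≤ ‖(A₁ - A₂) * J‖ + ‖A₂ * J - J * A₂‖ := by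
    simpa [sub_mul] using norm_add_le ((A₁ - A₂) * J) (A₂ * J - J * A₂)
  have bound₁₂ := hf_lip.norm_Dop_mul_sub_mul_Dop_le hL hA₁ hA₂ hP₁ hP₂ hP₁_le hP₂_le hJ₁₂
  have bound₁₁ := hf_lip.norm_Dop_mul_sub_mul_Dop_le hL hA₁ hA₁ hP₁ hP₁ hP₁_le hP₁_le hJ₁₁
  rw [mul_assoc 2 (2 / π)]
  have quasi := bound₁₂.trans (mul_le_mul_of_nonneg_left hA (by positivity))
  refine ⟨quasi, ?_⟩
  calc _ = ‖(Dop A₁ P₁ f * J - J * Dop A₂ P₂ f) - (Dop A₁ P₁ f * J - J * Dop A₁ P₁ f)‖ := by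
        rw [sub_sub_sub_cancel_left]
    _ ≤ _ := (norm_sub_le_of_le quasi bound₁₁).trans_eq (by ring)
end
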